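/- Let G be a finite connected simple AT-free graph with minimum degree δ(G) ≥ 2. Then diam(G) ≤ rc(G) ≤ diam(G) + 3. -/

import Mathlib

open SimpleGraph Set

/-- The predicate that an edge colouring `c` makes `G` rainbow connected: every pair of
vertices is joined by a path no two of whose edges receive the same colour. -/
def RainbowConnectedUnder {V : Type*} (G : SimpleGraph V) (c : Sym2 V → ℕ) : Prop :=
  ∀ u v : V, ∃ p : G.Walk u v, p.IsPath ∧ (p.edges.map c).Nodup

/-- The rainbow connection number of `G`: the least `n` such that some edge colouring
using colours `< n` makes `G` rainbow connected. -/
noncomputable def rc {V : Type*} (G : SimpleGraph V) : ℕ :=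
  sInf {n | ∃ c : Sym2 V → ℕ, (∀ e ∈ G.edgeSet, c e < n) ∧ RainbowConnectedUnder G c}

/-- Degree of a vertex (as the cardinality of its neighbour set). -/
noncomputable def deg {V : Type*} (G : SimpleGraph V) (v : V) : ℕ := (G.neighborSet v).ncard

/-- `D` is a dominating set of `G`. -/
def IsDominatingSet {V : Type*} (G : SimpleGraph V) (D : Set V) : Prop :=
  ∀ v : V, v ∈ D ∨ ∃ u ∈ D, G.Adj u v

/-- The connected domination number of `G`. -/
noncomputable def connDomNum {V : Type*} (G : SimpleGraph V) : ℕ :=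
  sInf {n | ∃ D : Set V, D.ncard = n ∧ IsDominatingSet G D ∧ (G.induce D).Connected}

/-- Distance of a vertex `v` to a set of vertices `D`. -/
noncomputable def distSet {V : Type*} (G : SimpleGraph V) (D : Set V) (v : V) : ℕ :=
  sInf ((fun u => G.dist u v) '' D)

/-- Diameter of `G`. -/
noncomputable def graphDiam {V : Type*} (G : SimpleGraph V) : ℕ :=
  sSup (Set.range fun p : V × V => G.dist p.1 p.2)

/-- Eccentricity of a vertex. -/
noncomputable def ecc {V : Type*} (G : SimpleGraph V) (v : V) : ℕ :=
  sSup (Set.range fun u => G.dist v u)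

/-- Radius of `G`. -/
noncomputable def graphRadius {V : Type*} (G : SimpleGraph V) : ℕ :=
  sInf (Set.range fun v => ecc G v)

/-- `G` is an interval graph: vertices can be assigned nonempty closed real intervals such
that two distinct vertices are adjacent iff their intervals intersect. -/
def IsIntervalGraph {V : Type*} (G : SimpleGraph V) : Prop :=
  ∃ a b : V → ℝ, (∀ v, a v ≤ b v) ∧
    ∀ u v : V, u ≠ v → (G.Adj u v ↔ (Set.Icc (a u) (b u) ∩ Set.Icc (a v) (b v)).Nonempty)

/-- `G` is a unit interval graph. -/
def IsUnitIntervalGraph {V : Type*} (G : SimpleGraph V) : Prop :=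
  ∃ a : V → ℝ,
    ∀ u v : V, u ≠ v →
      (G.Adj u v ↔ (Set.Icc (a u) (a u + 1) ∩ Set.Icc (a v) (a v + 1)).Nonempty)

/-- `G` is a circular arc graph: vertices can be assigned nonempty closed arcs of a circle
(images of closed intervals in `AddCircle 1`) such that two distinct vertices are adjacent
iff their arcs intersect. -/
def IsCircularArcGraph {V : Type*} (G : SimpleGraph V) : Prop :=
  ∃ a b : V → ℝ, (∀ v, a v ≤ b v) ∧
    ∀ u v : V, u ≠ v → (G.Adj u v ↔
      (((fun x : ℝ => (x : AddCircle (1:ℝ))) '' Set.Icc (a u) (b u)) ∩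
        ((fun x : ℝ => (x : AddCircle (1:ℝ))) '' Set.Icc (a v) (b v))).Nonempty)

/-- There is a path from `x` to `y` avoiding the closed neighbourhood of `z`. -/
def HasAvoidingPath {V : Type*} (G : SimpleGraph V) (x y z : V) : Prop :=
  ∃ p : G.Walk x y, p.IsPath ∧ ∀ w ∈ p.support, w ≠ z ∧ ¬ G.Adj z w

/-- `G` is AT-free: it has no asteroidal triple. -/
def IsATFree {V : Type*} (G : SimpleGraph V) : Prop :=
  ¬ ∃ x y z : V, x ≠ y ∧ y ≠ z ∧ x ≠ z ∧ ¬G.Adj x y ∧ ¬G.Adj y z ∧ ¬G.Adj x z ∧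
    HasAvoidingPath G x y z ∧ HasAvoidingPath G y z x ∧ HasAvoidingPath G x z y

/-- `G` is a threshold graph. -/
def IsThresholdGraph {V : Type*} (G : SimpleGraph V) : Prop :=
  ∃ (w : V → ℝ) (t : ℝ), ∀ u v : V, u ≠ v → (G.Adj u v ↔ t ≤ w u + w v)

/-- `G` is a chain graph: bipartite with the neighbourhoods of one side linearly ordered
by inclusion. -/
def IsChainGraph {V : Type*} (G : SimpleGraph V) : Prop :=
  ∃ A B : Set V, A ∪ B = Set.univ ∧ Disjoint A B ∧
    (∀ u v : V, G.Adj u v → ¬(u ∈ A ∧ v ∈ A) ∧ ¬(u ∈ B ∧ v ∈ B)) ∧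
    ∀ a₁ ∈ A, ∀ a₂ ∈ A,
      G.neighborSet a₁ ⊆ G.neighborSet a₂ ∨ G.neighborSet a₂ ⊆ G.neighborSet a₁

/-- `G` is chordal: it has no induced cycle of length greater than 3. -/
def IsChordal {V : Type*} (G : SimpleGraph V) : Prop :=
  ∀ n : ℕ, 4 ≤ n → IsEmpty (SimpleGraph.cycleGraph n ↪g G)

/-!
Two facts combine.

* If `D` is a connected dominating set and every vertex outside `D` has degree at least `2`, then
  `rc G ≤ rc G[D] + 3`. Two new colors go to the edges between `D` and its complement and a third to
  the edges outside `D`, in such a way that every outside vertex enters `D` in one color, and in the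
  other color either directly or through an outside neighbor. Two outside vertices can then always
  enter `D` in different colors.
* A connected AT-free graph has a dominating geodesic: choose a geodesic from an admissible vertex
  (in the sense of Corneil, Olariu and Stewart) to every vertex, and take one that misses as few
  vertices as possible. An admissible vertex is found by induction: for an inclusion-maximal
  component `C` among those of the graphs `G - N[z]`, the vertices outside `C` with no neighbor in
  `C` form a module, whose admissible vertices are admissible in `G`.

A path with `ℓ` edges is rainbow connected with `ℓ` colors, and a geodesic has at most `diam G`.
-/

section Rainbow

variable {V α : Type*} {G : SimpleGraph V}

/-- `u` and `v` are joined by a walk whose edges have pairwise distinct colors, all of them in the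
palette `K`. Keeping track of the palette lets rainbow walks be extended edge by edge; any such walk
can be shortened to a path. -/
def RainbowReachable (G : SimpleGraph V) (c : Sym2 V → α) (K : Set α) (u v : V) : Prop :=
  ∃ p : G.Walk u v, (p.edges.map c).Nodup ∧ ∀ e ∈ p.edges, c e ∈ K

namespace RainbowReachable

variable {c : Sym2 V → α} {K L : Set α} {u v w : V}

lemma mono (hKL : K ⊆ L) : RainbowReachable G c K u v → RainbowReachable G c L u v :=
  fun ⟨p, hp, hpK⟩ => ⟨p, hp, fun e he => hKL (hpK e he)⟩

lemma symm : RainbowReachable G c K u v → RainbowReachable G c K v u := by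
  rintro ⟨p, hp, hpK⟩
  refine ⟨p.reverse, ?_, fun e he => hpK e (by simpa using he)⟩
  rwa [Walk.edges_reverse, List.map_reverse, List.nodup_reverse]

lemma cons (huv : G.Adj u v) (hc : c s(u, v) ∉ K) :
    RainbowReachable G c K v w → RainbowReachable G c (insert (c s(u, v)) K) u w := by
  rintro ⟨p, hp, hpK⟩
  refine ⟨p.cons huv, ?_, ?_⟩
  · rw [Walk.edges_cons, List.map_cons, List.nodup_cons]
    refine ⟨fun hmem => ?_, hp⟩
    obtain ⟨e, he, hce⟩ := List.mem_map.1 hmem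
    exact hc (hce ▸ hpK e he)
  · simp only [Walk.edges_cons, List.forall_mem_cons]
    exact ⟨.inl rfl, fun e he => .inr (hpK e he)⟩

lemma exists_isPath (h : RainbowReachable G c K u v) :
    ∃ p : G.Walk u v, p.IsPath ∧ (p.edges.map c).Nodup := by
  classical
  obtain ⟨p, hp, -⟩ := h
  refine ⟨p.bypass, p.bypass_isPath, List.Nodup.map_on ?_ p.bypass_isPath.isTrail.edges_nodup⟩
  exact fun a ha b hb => List.inj_on_of_nodup_map hp
    (p.edges_bypass_subset_edges ha) (p.edges_bypass_subset_edges hb)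

lemma of_injOn (p : G.Walk u v) (hc : Set.InjOn c {e | e ∈ p.edges}) :
    RainbowReachable G c Set.univ u v := by
  classical
  refine ⟨p.bypass, List.Nodup.map_on ?_ p.bypass_isPath.isTrail.edges_nodup, fun _ _ => trivial⟩
  exact fun a ha b hb =>
    hc (p.edges_bypass_subset_edges ha) (p.edges_bypass_subset_edges hb)

end RainbowReachable

lemma exists_rainbowConnectedUnder_lt_rc [Finite V] (hG : G.Preconnected) :
    ∃ c : Sym2 V → ℕ, (∀ e ∈ G.edgeSet, c e < rc G) ∧ RainbowConnectedUnder G c := by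
  let c : Sym2 V → ℕ := fun e => Finite.equivFin (Sym2 V) e
  have hc : Function.Injective c := Fin.val_injective.comp (Finite.equivFin (Sym2 V)).injective
  have hrainbow : RainbowConnectedUnder G c := fun u v =>
    (RainbowReachable.of_injOn (hG u v).some hc.injOn).exists_isPath
  have hmem : ∃ n, ∃ c : Sym2 V → ℕ, (∀ e ∈ G.edgeSet, c e < n) ∧ RainbowConnectedUnder G c :=
    ⟨Nat.card (Sym2 V), c, fun e _ => (Finite.equivFin (Sym2 V) e).isLt, hrainbow⟩
  exact Nat.sInf_mem hmem

lemma length_le_of_nodup_map_edges {u v : V} {c : Sym2 V → ℕ} {n : ℕ}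
    (hc : ∀ e ∈ G.edgeSet, c e < n) (p : G.Walk u v) (hp : (p.edges.map c).Nodup) :
    p.length ≤ n := by
  have hsub : p.edges.map c ⊆ List.range n := by
    intro a ha
    obtain ⟨e, he, rfl⟩ := List.mem_map.1 ha
    exact List.mem_range.2 (hc e (p.edges_subset_edgeSet he))
  simpa using (hp.subperm hsub).length_le

lemma graphDiam_le_rc [Finite V] (hG : G.Preconnected) : graphDiam G ≤ rc G := by
  obtain ⟨c, hc, hrainbow⟩ := exists_rainbowConnectedUnder_lt_rc hG
  refine csSup_le' ?_
  rintro _ ⟨⟨u, v⟩, rfl⟩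
  obtain ⟨p, -, hp⟩ := hrainbow u v
  exact (dist_le p).trans (length_le_of_nodup_map_edges hc p hp)

lemma dist_le_graphDiam [Finite V] (u v : V) : G.dist u v ≤ graphDiam G :=
  le_csSup (Set.finite_range fun p : V × V => G.dist p.1 p.2).bddAbove ⟨(u, v), rfl⟩

lemma rc_le_length_of_spanning {u v : V} (p : G.Walk u v) (hp : ∀ w, w ∈ p.support) :
    rc G ≤ p.length := by
  classical
  -- The reduction modulo `p.length` only matters for edges off `p`, whose index is `p.length`.
  let c : Sym2 V → ℕ := fun e => p.edges.idxOf e % p.length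
  have hc : ∀ e ∈ p.edges, c e = p.edges.idxOf e := fun e he =>
    Nat.mod_eq_of_lt (p.length_edges ▸ List.idxOf_lt_length_of_mem he)
  have hinj : Set.InjOn c {e | e ∈ p.edges} := fun a ha b hb hab =>
    (List.idxOf_inj ha).1 (by rwa [hc a ha, hc b hb] at hab)
  refine Nat.sInf_le ⟨c, fun e he => Nat.mod_lt _ ?_, fun x y => ?_⟩
  · induction e with | _ x y =>
    refine Nat.pos_of_ne_zero fun hlen => G.ne_of_adj he ?_
    have hsupp : p.support = [u] := Walk.nil_iff_support_eq.1 (Walk.length_eq_zero_iff.1 hlen)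
    have heq : ∀ w, w = u := fun w => List.mem_singleton.1 (hsupp ▸ hp w)
    exact (heq x).trans (heq y).symm
  · let q := (p.takeUntil x (hp x)).reverse.append (p.takeUntil y (hp y))
    have hq : ∀ e ∈ q.edges, e ∈ p.edges := by
      simp only [q, Walk.edges_append, Walk.edges_reverse, List.mem_append, List.mem_reverse]
      rintro e (he | he)
      exacts [p.edges_takeUntil_subset_edges _ he, p.edges_takeUntil_subset_edges _ he]
    exact (RainbowReachable.of_injOn q (hinj.mono hq)).exists_isPath

lemma rc_induce_support_le_length {u v : V} (p : G.Walk u v) :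
    rc (G.induce {w | w ∈ p.support}) ≤ p.length := by
  let q := p.induce {w | w ∈ p.support} fun _ hw => hw
  have hq : q.length = p.length := by
    rw [← Walk.length_map (Embedding.induce _).toHom q]
    exact congrArg Walk.length (Walk.map_induce p _)
  rw [← hq]
  exact rc_le_length_of_spanning q fun w => by
    rw [Walk.support_induce]
    exact (List.mem_attachWith _ w).2 w.2

end Rainbow

section DominatingExtension

variable {V : Type*} {G : SimpleGraph V} {D : Set V}

lemma exists_bool_forall_adj_exists_adj_ne (H : SimpleGraph V) :
    ∃ f : V → Bool, ∀ v w, H.Adj v w → ∃ w', H.Adj v w' ∧ f w' = !f v := by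
  obtain ⟨F, hFH, hF, hreach⟩ := H.exists_isAcyclic_reachable_eq_le
  let col : F.Coloring Bool := F.recolorOfEquiv finTwoEquiv hF.coloringTwo
  refine ⟨col, fun v w hvw => ?_⟩
  obtain ⟨w', hvw'⟩ := mem_support_of_reachable hvw.ne (hreach ▸ hvw.reachable)
  exact ⟨w', hFH hvw', Bool.eq_not.2 (col.valid hvw').symm⟩

/-- `v` has a leg of type `b`, that is, an edge into `D` to which the two-coloring `leg` of the
legs assigns `b`; the value `leg v d` refers to the edge from `v ∉ D` to `d ∈ D`. -/
def HasLeg (G : SimpleGraph V) (D : Set V) (leg : V → V → Bool) (b : Bool) (v : V) : Prop :=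
  ∃ d ∈ D, G.Adj v d ∧ leg v d = b

/-- A two-coloring of the legs for which every vertex outside `D` has a leg of one type and, at
distance at most one outside `D`, a vertex with a leg of the other type. -/
def IsLegColoring (G : SimpleGraph V) (D : Set V) (leg : V → V → Bool) : Prop :=
  ∀ v ∉ D, ∃ b, HasLeg G D leg b v ∧
    (HasLeg G D leg (!b) v ∨ ∃ w ∉ D, G.Adj v w ∧ HasLeg G D leg (!b) w)

/- A vertex with an outside neighbor gives all its legs its own color in a two-coloring of `V ∖ D`
that is not constant on any closed neighborhood; any other vertex has two legs, which get different
colors. -/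
lemma exists_isLegColoring (hD : IsDominatingSet G D) (hδ : ∀ v ∉ D, 2 ≤ deg G v) :
    ∃ leg, IsLegColoring G D leg := by
  classical
  have hentry : ∀ v ∉ D, ∃ d ∈ D, G.Adj v d := fun v hv =>
    (hD v).elim (absurd · hv) fun ⟨d, hd, hdv⟩ => ⟨d, hd, hdv.symm⟩
  choose! entry entry_mem adj_entry using hentry
  obtain ⟨f, hf⟩ := exists_bool_forall_adj_exists_adj_ne (G.induce Dᶜ).spanningCoe
  have hadj : ∀ v w, (G.induce Dᶜ).spanningCoe.Adj v w ↔ v ∉ D ∧ w ∉ D ∧ G.Adj v w := by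
    intro v w
    simp only [spanningCoe, map_adj, comap_adj, Function.Embedding.subtype_apply, Subtype.exists]
    grind
  simp only [hadj] at hf
  let leg v d := if ∃ w ∉ D, G.Adj v w then f v else decide (d = entry v)
  have leg_of_adj : ∀ v ∉ D, ∀ w ∉ D, G.Adj v w → HasLeg G D leg (f v) v := fun v hv w hw hvw =>
    ⟨entry v, entry_mem v hv, adj_entry v hv, if_pos ⟨w, hw, hvw⟩⟩
  refine ⟨leg, fun v hv => ?_⟩
  by_cases hout : ∃ w ∉ D, G.Adj v w
  · obtain ⟨w, hw, hvw⟩ := hout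
    obtain ⟨w', ⟨-, hw', hvw'⟩, hfw'⟩ := hf v w ⟨hv, hw, hvw⟩
    exact ⟨f v, leg_of_adj v hv w hw hvw,
      .inr ⟨w', hw', hvw', hfw' ▸ leg_of_adj w' hw' v hv hvw'.symm⟩⟩
  · obtain ⟨d, hvd, hd⟩ := Set.exists_ne_of_one_lt_ncard (hδ v hv) (entry v)
    have hdD : d ∈ D := by_contra fun h => hout ⟨d, h, hvd⟩
    exact ⟨true, ⟨entry v, entry_mem v hv, adj_entry v hv, by simp [leg, hout]⟩,
      .inl ⟨d, hdD, hvd, by simp [leg, hout, hd]⟩⟩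

open Classical in
/-- The coloring of `G` that extends a coloring `c` of `G[D]` with colors below `k`: the legs
receive `k` or `k + 1` according to `leg`, and the edges outside `D` receive `k + 2`. -/
noncomputable def extendColoring (D : Set V) (c : Sym2 D → ℕ) (k : ℕ) (leg : V → V → Bool) :
    Sym2 V → ℕ :=
  Sym2.lift ⟨fun u v =>
    if hu : u ∈ D then
      if hv : v ∈ D then c s(⟨u, hu⟩, ⟨v, hv⟩) else k + (leg v u).toNat
    else if v ∈ D then k + (leg u v).toNat else k + 2, fun u v => by
      by_cases hu : u ∈ D <;> by_cases hv : v ∈ D <;> simp [hu, hv, Sym2.eq_swap]⟩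

section extendColoring

variable {c : Sym2 D → ℕ} {k : ℕ} {leg : V → V → Bool}

lemma extendColoring_map_val (e : Sym2 D) :
    extendColoring D c k leg (e.map Subtype.val) = c e := by
  induction e with | _ u v => simp [extendColoring]

lemma extendColoring_leg {v d : V} (hv : v ∉ D) (hd : d ∈ D) :
    extendColoring D c k leg s(v, d) = k + (leg v d).toNat := by
  simp [extendColoring, hv, hd]

lemma extendColoring_outside {v w : V} (hv : v ∉ D) (hw : w ∉ D) :
    extendColoring D c k leg s(v, w) = k + 2 := by
  simp [extendColoring, hv, hw]

lemma extendColoring_lt (hc : ∀ e ∈ (G.induce D).edgeSet, c e < k) :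
    ∀ e ∈ G.edgeSet, extendColoring D c k leg e < k + 3 := by
  intro e he
  induction e with | _ u v =>
  by_cases hu : u ∈ D <;> by_cases hv : v ∈ D
  · have := hc s(⟨u, hu⟩, ⟨v, hv⟩) he
    simp only [extendColoring, Sym2.lift_mk, hu, hv, dite_true]
    omega
  · rw [Sym2.eq_swap, extendColoring_leg hv hu]
    have := (leg v u).toNat_le
    omega
  · rw [extendColoring_leg hu hv]
    have := (leg u v).toNat_le
    omega
  · rw [extendColoring_outside hu hv]
    omega

lemma rainbowReachable_extendColoring_of_mem (hc : ∀ e ∈ (G.induce D).edgeSet, c e < k)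
    (hrainbow : RainbowConnectedUnder (G.induce D) c) {d d' : V} (hd : d ∈ D) (hd' : d' ∈ D) :
    RainbowReachable G (extendColoring D c k leg) (Set.Iio k) d d' := by
  obtain ⟨p, -, hp⟩ := hrainbow ⟨d, hd⟩ ⟨d', hd'⟩
  let q : G.Walk d d' := p.map (Embedding.induce D).toHom
  have hedges : q.edges = p.edges.map (Sym2.map Subtype.val) := Walk.edges_map _ _
  refine ⟨q, ?_, ?_⟩
  · rw [hedges, List.map_map]
    simpa only [Function.comp_def, extendColoring_map_val] using hp
  · simp only [hedges, List.forall_mem_map, extendColoring_map_val]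
    exact fun e he => hc e (p.edges_subset_edgeSet he)

lemma rainbowReachable_extendColoring_leg (hc : ∀ e ∈ (G.induce D).edgeSet, c e < k)
    (hrainbow : RainbowConnectedUnder (G.induce D) c) {b : Bool} {v d : V} (hv : v ∉ D)
    (hd : d ∈ D) (hleg : HasLeg G D leg b v) :
    RainbowReachable G (extendColoring D c k leg) (insert (k + b.toNat) (Set.Iio k)) v d := by
  obtain ⟨d', hd', hvd', rfl⟩ := hleg
  rw [← extendColoring_leg (c := c) (k := k) hv hd']
  refine (rainbowReachable_extendColoring_of_mem hc hrainbow hd' hd).cons hvd' ?_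
  rw [extendColoring_leg hv hd', Set.mem_Iio]
  omega

lemma rainbowReachable_extendColoring_two_legs (hc : ∀ e ∈ (G.induce D).edgeSet, c e < k)
    (hrainbow : RainbowConnectedUnder (G.induce D) c) {b : Bool} {u v : V} (hu : u ∉ D)
    (hv : v ∉ D) (hlegu : HasLeg G D leg b u) (hlegv : HasLeg G D leg (!b) v) :
    RainbowReachable G (extendColoring D c k leg) (Set.Iio (k + 2)) u v := by
  obtain ⟨d, hd, hud, rfl⟩ := hlegu
  have hdv := (rainbowReachable_extendColoring_leg hc hrainbow hv hd hlegv).symm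
  refine (hdv.cons hud ?_).mono ?_
  · rw [extendColoring_leg hu hd]
    cases leg u d <;> simp
  · rw [extendColoring_leg hu hd]
    rintro a (rfl | rfl | ha)
    · cases leg u d <;> simp
    · cases leg u d <;> simp
    · exact Set.mem_Iio.2 ((Set.mem_Iio.1 ha).trans (by omega))

lemma rainbowReachable_extendColoring_outside (hc : ∀ e ∈ (G.induce D).edgeSet, c e < k)
    (hrainbow : RainbowConnectedUnder (G.induce D) c) (hleg : IsLegColoring G D leg) {u v : V}
    (hu : u ∉ D) (hv : v ∉ D) :
    RainbowReachable G (extendColoring D c k leg) Set.univ u v := by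
  obtain ⟨b, hub, hub'⟩ := hleg u hu
  obtain ⟨b', hvb', -⟩ := hleg v hv
  obtain rfl | rfl : b' = !b ∨ b' = b := by cases b <;> cases b' <;> simp
  · exact (rainbowReachable_extendColoring_two_legs hc hrainbow hu hv hub hvb').mono
      (Set.subset_univ _)
  · rw [← Bool.not_not b'] at hvb'
    obtain hub' | ⟨w, hw, huw, hwb'⟩ := hub'
    · exact (rainbowReachable_extendColoring_two_legs hc hrainbow hu hv hub' hvb').mono
        (Set.subset_univ _)
    · have hwv := rainbowReachable_extendColoring_two_legs hc hrainbow hw hv hwb' hvb'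
      exact (hwv.cons huw (by simp [extendColoring_outside hu hw])).mono (Set.subset_univ _)

lemma rainbowConnectedUnder_extendColoring
    (hc : ∀ e ∈ (G.induce D).edgeSet, c e < k)
    (hrainbow : RainbowConnectedUnder (G.induce D) c) (hleg : IsLegColoring G D leg) :
    RainbowConnectedUnder G (extendColoring D c k leg) := by
  have mixed : ∀ u ∉ D, ∀ v ∈ D,
      RainbowReachable G (extendColoring D c k leg) Set.univ u v := fun u hu v hv =>
    have ⟨_, hub, _⟩ := hleg u hu
    (rainbowReachable_extendColoring_leg hc hrainbow hu hv hub).mono (Set.subset_univ _)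
  refine fun u v => RainbowReachable.exists_isPath (K := Set.univ) ?_
  by_cases hu : u ∈ D <;> by_cases hv : v ∈ D
  · exact (rainbowReachable_extendColoring_of_mem hc hrainbow hu hv).mono (Set.subset_univ _)
  · exact (mixed v hv u hu).symm
  · exact mixed u hu v hv
  · exact rainbowReachable_extendColoring_outside hc hrainbow hleg hu hv

end extendColoring

theorem rc_le_rc_induce_add_three [Finite V] (hD : IsDominatingSet G D)
    (hconn : (G.induce D).Preconnected) (hδ : ∀ v ∉ D, 2 ≤ deg G v) :
    rc G ≤ rc (G.induce D) + 3 := by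
  obtain ⟨c, hc, hrainbow⟩ := exists_rainbowConnectedUnder_lt_rc hconn
  obtain ⟨leg, hleg⟩ := exists_isLegColoring hD hδ
  exact Nat.sInf_le ⟨extendColoring D c (rc (G.induce D)) leg, extendColoring_lt hc,
    rainbowConnectedUnder_extendColoring hc hrainbow hleg⟩

end DominatingExtension

section ReachableIn

variable {V : Type*} {G : SimpleGraph V}

/-- `x` and `y` are joined by a walk all of whose vertices, including `x` and `y`, lie in `S`. -/
def ReachableIn (G : SimpleGraph V) (S : Set V) (x y : V) : Prop :=
  ∃ p : G.Walk x y, ∀ w ∈ p.support, w ∈ S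

/-- The component of `x` in `G[S]`, as a set of vertices of `G`. It is empty if `x ∉ S`. -/
def componentIn (G : SimpleGraph V) (S : Set V) (x : V) : Set V :=
  {y | ReachableIn G S x y}

namespace ReachableIn

variable {S T : Set V} {x y z : V}

lemma refl (hx : x ∈ S) : ReachableIn G S x x :=
  ⟨.nil, by simpa using hx⟩

lemma symm : ReachableIn G S x y → ReachableIn G S y x :=
  fun ⟨p, hp⟩ => ⟨p.reverse, by simpa using hp⟩

lemma trans : ReachableIn G S x y → ReachableIn G S y z → ReachableIn G S x z := by
  rintro ⟨p, hp⟩ ⟨q, hq⟩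
  exact ⟨p.append q, fun w hw => ((p.mem_support_append_iff q).1 hw).elim (hp w) (hq w)⟩

lemma mono (hST : S ⊆ T) : ReachableIn G S x y → ReachableIn G T x y :=
  fun ⟨p, hp⟩ => ⟨p, fun w hw => hST (hp w hw)⟩

lemma of_adj (hx : x ∈ S) (hy : y ∈ S) (hxy : G.Adj x y) : ReachableIn G S x y :=
  ⟨hxy.toWalk, by simp [hx, hy]⟩

lemma left_mem : ReachableIn G S x y → x ∈ S :=
  fun ⟨p, hp⟩ => hp x p.start_mem_support

lemma right_mem : ReachableIn G S x y → y ∈ S :=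
  fun ⟨p, hp⟩ => hp y p.end_mem_support

lemma of_mem_support (p : G.Walk x y) (hp : ∀ w ∈ p.support, w ∈ S) (hz : z ∈ p.support) :
    ReachableIn G S x z := by
  classical
  exact ⟨p.takeUntil z hz, fun w hw => hp w (p.support_takeUntil_subset_support hz hw)⟩

lemma of_forall_adj_mem (hT : ∀ a ∈ T, ∀ b ∈ S, G.Adj a b → b ∈ T) (hx : x ∈ T) :
    ReachableIn G S x y → ReachableIn G (T ∩ S) x y := by
  rintro ⟨p, hp⟩
  induction p with
  | nil => exact refl ⟨hx, hp _ (by simp)⟩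
  | cons hadj q ih =>
    rw [Walk.support_cons, List.forall_mem_cons] at hp
    have hnext := hT _ hx _ (hp.2 _ q.start_mem_support) hadj
    have hstep : ReachableIn G (T ∩ S) _ _ :=
      of_adj ⟨hx, hp.1⟩ ⟨hnext, hp.2 _ q.start_mem_support⟩ hadj
    exact hstep.trans (ih hnext hp.2)

protected lemma componentIn (h : ReachableIn G S x y) : ReachableIn G (componentIn G S x) x y :=
  have ⟨p, hp⟩ := h
  ⟨p, fun _ hw => of_mem_support p hp hw⟩

lemma hasAvoidingPath (h : ReachableIn G (Gᶜ.neighborSet z) x y) : HasAvoidingPath G x y z := by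
  classical
  obtain ⟨p, hp⟩ := h
  refine ⟨p.bypass, p.bypass_isPath, fun w hw => ?_⟩
  have hzw := hp w (p.support_bypass_subset_support hw)
  exact ⟨hzw.1.symm, hzw.2⟩

end ReachableIn

lemma IsATFree.not_reachableIn (hat : IsATFree G) {x y z : V}
    (hxz : ReachableIn G (Gᶜ.neighborSet y) x z) (hyz : ReachableIn G (Gᶜ.neighborSet x) y z) :
    ¬ ReachableIn G (Gᶜ.neighborSet z) x y := fun hxy =>
  have hyx : Gᶜ.Adj y x := hxz.left_mem
  have hyz' : Gᶜ.Adj y z := hxz.right_mem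
  have hxz' : Gᶜ.Adj x z := hyz.right_mem
  hat ⟨x, y, z, hyx.ne', hyz'.ne, hxz'.ne, hyx.symm.2, hyz'.2, hxz'.2,
    hxy.hasAvoidingPath, hyz.hasAvoidingPath, hxz.hasAvoidingPath⟩

end ReachableIn

section Admissible

variable {V : Type*} {G : SimpleGraph V} {R C M : Set V} {z : V}

/-- `z` is an admissible vertex of `G[R]` in the sense of Corneil, Olariu and Stewart: no two
vertices `u`, `v` are unrelated with respect to `z`, that is, joined to `z` by paths of `G[R]` of
which the one from `u` misses the closed neighborhood of `v` and vice versa. -/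
def IsAdmissible (G : SimpleGraph V) (R : Set V) (z : V) : Prop :=
  ∀ u v, ReachableIn G (R ∩ Gᶜ.neighborSet v) u z → ¬ ReachableIn G (R ∩ Gᶜ.neighborSet u) v z

/-- `C` and `M` are disjoint subsets of `R` with no edges between them, `C` induces a connected
graph, and all vertices of `R` outside `C ∪ M` are adjacent to all of `M`. In particular `M` is a
module of `G[R]`. -/
structure IsModuleSplit (G : SimpleGraph V) (R C M : Set V) : Prop where
  subset_left : C ⊆ R
  subset_right : M ⊆ R
  reachableIn : ∀ x ∈ C, ∀ y ∈ C, ReachableIn G C x y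
  compl_adj : ∀ a ∈ M, ∀ x ∈ C, Gᶜ.Adj a x
  adj : ∀ a ∈ M, ∀ s ∈ R, s ∉ C → s ∉ M → G.Adj a s

namespace IsModuleSplit

lemma not_reachableIn (h : IsModuleSplit G R C M) {x y v : V} (hv : v ∈ M) (hx : x ∈ C)
    (hy : y ∈ M) : ¬ ReachableIn G (R ∩ Gᶜ.neighborSet v) x y := by
  intro hxy
  have hclosed : ∀ a ∈ C, ∀ b ∈ R ∩ Gᶜ.neighborSet v, G.Adj a b → b ∈ C := by
    intro a ha b hb hab
    by_contra hbC
    exact hb.2.2 (h.adj v hv b hb.1 hbC fun hbM => (h.compl_adj b hbM a ha).2 hab.symm)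
  exact (h.compl_adj y hy y (hxy.of_forall_adj_mem hclosed hx).right_mem.1).ne rfl

lemma reachableIn_right (h : IsModuleSplit G R C M) {x y v : V} (hv : v ∈ M) (hx : x ∈ M)
    (hxy : ReachableIn G (R ∩ Gᶜ.neighborSet v) x y) :
    ReachableIn G (M ∩ Gᶜ.neighborSet v) x y := by
  have hclosed : ∀ a ∈ M, ∀ b ∈ R ∩ Gᶜ.neighborSet v, G.Adj a b → b ∈ M := by
    intro a ha b hb hab
    by_contra hbM
    exact hb.2.2 (h.adj v hv b hb.1 (fun hbC => (h.compl_adj a ha b hbC).2 hab) hbM)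
  exact (hxy.of_forall_adj_mem hclosed hx).mono
    (Set.inter_subset_inter_right M Set.inter_subset_right)

lemma isAdmissible (h : IsModuleSplit G R C M) (hat : IsATFree G) (hzM : z ∈ M)
    (hz : IsAdmissible G M z) : IsAdmissible G R z := by
  intro u v huz hvz
  have mem_or_mem : ∀ w, w ∈ R → Gᶜ.Adj w z → w ∈ C ∨ w ∈ M := by
    intro w hwR hwz
    by_contra! hw
    exact hwz.symm.2 (h.adj z hzM w hwR hw.1 hw.2)
  obtain huC | huM := mem_or_mem u huz.left_mem.1 hvz.right_mem.2 <;>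
    obtain hvC | hvM := mem_or_mem v hvz.left_mem.1 huz.right_mem.2
  · exact hat.not_reachableIn (huz.mono Set.inter_subset_right) (hvz.mono Set.inter_subset_right)
      ((h.reachableIn u huC v hvC).mono (h.compl_adj z hzM))
  · exact h.not_reachableIn hvM huC hzM huz
  · exact h.not_reachableIn huM hvC hzM hvz
  · exact hz u v (h.reachableIn_right hvM huM huz) (h.reachableIn_right huM hvM hvz)

end IsModuleSplit

lemma exists_isModuleSplit [Finite V] {c : V} (hz : z ∈ R) (hc : c ∈ R) (hzc : Gᶜ.Adj z c) :
    ∃ C M, IsModuleSplit G R C M ∧ C.Nonempty ∧ M.Nonempty := by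
  obtain ⟨C, hC⟩ := (Set.toFinite {C | ∃ z ∈ R, ∃ c ∈ R ∩ Gᶜ.neighborSet z,
    C = componentIn G (R ∩ Gᶜ.neighborSet z) c}).exists_maximal ⟨_, z, hz, c, ⟨hc, hzc⟩, rfl⟩
  obtain ⟨z, hz, c, hc, hCdef⟩ := hC.prop
  have hcC : c ∈ C := hCdef ▸ ReachableIn.refl hc
  have hCsub : C ⊆ R ∩ Gᶜ.neighborSet z := hCdef ▸ fun _ => ReachableIn.right_mem
  have hconn : ∀ x ∈ C, ReachableIn G C c x := by
    rw [hCdef]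
    exact fun x => ReachableIn.componentIn
  refine ⟨C, {a ∈ R | C ⊆ Gᶜ.neighborSet a}, ⟨fun x hx => (hCsub hx).1, fun a ha => ha.1,
    fun x hx y hy => (hconn x hx).symm.trans (hconn y hy), fun a ha => ha.2, ?_⟩,
    ⟨c, hcC⟩, ⟨z, hz, fun x hx => (hCsub hx).2⟩⟩
  rintro a ⟨haR, haC⟩ s hsR hsC hsM
  by_contra has
  have hconn_a : ∀ x ∈ C, ReachableIn G (R ∩ Gᶜ.neighborSet a) c x := fun x hx =>
    (hconn x hx).mono fun y hy => ⟨(hCsub hy).1, haC hy⟩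
  have hCa : C = componentIn G (R ∩ Gᶜ.neighborSet a) c :=
    hC.eq_of_subset ⟨a, haR, c, ⟨hc.1, haC hcC⟩, rfl⟩ hconn_a
  obtain ⟨x, hx, hsx⟩ : ∃ x ∈ C, ¬ Gᶜ.Adj s x := by
    by_contra! h
    exact hsM ⟨hsR, h⟩
  have hxs : G.Adj x s := by
    have hne : s ≠ x := fun h => hsC (h ▸ hx)
    exact G.adj_symm (by_contra fun h => hsx ⟨hne, h⟩)
  have has' : Gᶜ.Adj a s := ⟨fun h => hsM (h ▸ ⟨haR, haC⟩), has⟩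
  refine hsC (hCa ▸ (hconn_a x hx).trans ?_)
  exact .of_adj ⟨(hCsub hx).1, haC hx⟩ ⟨hsR, has'⟩ hxs

lemma IsATFree.exists_isAdmissible [Finite V] (hat : IsATFree G) (hR : R.Nonempty) :
    ∃ z ∈ R, IsAdmissible G R z := by
  induction R using WellFoundedLT.induction with | _ R ih =>
  by_cases hnonadj : ∃ z ∈ R, ∃ c ∈ R, Gᶜ.Adj z c
  · obtain ⟨z, hz, c, hc, hzc⟩ := hnonadj
    obtain ⟨C, M, hsplit, ⟨x, hx⟩, hM⟩ := exists_isModuleSplit hz hc hzc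
    have hMR : M < R := (Set.ssubset_iff_of_subset hsplit.subset_right).2
      ⟨x, hsplit.subset_left hx, fun hxM => (hsplit.compl_adj x hxM x hx).ne rfl⟩
    obtain ⟨z, hzM, hz⟩ := ih M hMR hM
    exact ⟨z, hsplit.subset_right hzM, hsplit.isAdmissible hat hzM hz⟩
  · obtain ⟨z, hz⟩ := hR
    refine ⟨z, hz, fun u v huz hvz => hnonadj ?_⟩
    exact ⟨v, hvz.left_mem.1, z, hz, huz.right_mem.2⟩

end Admissible

section DominatingGeodesic

variable {V : Type*} {G : SimpleGraph V}

lemma isDominatingSet_iff_forall_not_subset {D : Set V} :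
    IsDominatingSet G D ↔ ∀ v, ¬ D ⊆ Gᶜ.neighborSet v := by
  refine forall_congr' fun v => ?_
  simp only [Set.not_subset, mem_neighborSet, compl_adj, not_and_or, not_not, and_or_left,
    exists_or, exists_eq_right', G.adj_comm v]

/- If `v` is missed by `P y`, then `P v` misses fewer vertices: a vertex `u` missed by `P v` but
not by `P y` would be unrelated to `v` with respect to `x`. -/
lemma IsAdmissible.exists_isDominatingSet_support [Finite V] {x : V}
    (hx : IsAdmissible G Set.univ x) (P : ∀ y, G.Walk x y) :
    ∃ y, IsDominatingSet G {w | w ∈ (P y).support} := by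
  simp only [IsAdmissible, Set.univ_inter] at hx
  let missed (y : V) : Set V := {v | ∀ w ∈ (P y).support, Gᶜ.Adj v w}
  obtain ⟨y, -, hy⟩ := (Set.finite_univ (α := V)).exists_minimalFor missed _ ⟨x, trivial⟩
  refine ⟨y, isDominatingSet_iff_forall_not_subset.2 fun v (hv : v ∈ missed y) => ?_⟩
  have hsub : missed v ⊆ missed y := by
    intro u hu
    have hvx : ReachableIn G (Gᶜ.neighborSet u) v x := .symm ⟨P v, hu⟩
    have huv : Gᶜ.Adj v u := hvx.left_mem.symm
    by_contra huy
    obtain ⟨d, hd, hud⟩ : ∃ d ∈ (P y).support, ¬ Gᶜ.Adj u d := by simpa [missed] using huy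
    have hdx : ReachableIn G (Gᶜ.neighborSet v) d x :=
      (ReachableIn.of_mem_support (P y) hv hd).symm
    refine hx u v ?_ hvx
    obtain rfl | hadj : u = d ∨ G.Adj u d := by
      simpa [compl_adj, or_iff_not_imp_left] using hud
    · exact hdx
    · exact (ReachableIn.of_adj (S := Gᶜ.neighborSet v) huv (hv d hd) hadj).trans hdx
  have hvmissed : v ∈ missed v := hy trivial hsub hv
  exact (hvmissed v (P v).end_mem_support).ne rfl

lemma IsATFree.exists_dominating_geodesic [Finite V] (hat : IsATFree G) (hG : G.Connected) :
    ∃ (x y : V) (p : G.Walk x y), p.length = G.dist x y ∧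
      IsDominatingSet G {w | w ∈ p.support} := by
  obtain ⟨x, -, hx⟩ := hat.exists_isAdmissible (R := Set.univ)
    (Set.nonempty_iff_univ_nonempty.1 hG.nonempty)
  choose P hP using hG.exists_walk_length_eq_dist x
  obtain ⟨y, hy⟩ := hx.exists_isDominatingSet_support P
  exact ⟨x, y, P y, hP y, hy⟩

end DominatingGeodesic

/-- For a finite connected AT-free graph `G` with minimum degree at
least 2, `diam(G) ≤ rc(G) ≤ diam(G) + 3`. -/
theorem stmt_4 {V : Type*} [Fintype V] (G : SimpleGraph V) (hG : G.Connected)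
    (hat : IsATFree G) (hδ : ∀ v : V, 2 ≤ deg G v) :
    graphDiam G ≤ rc G ∧ rc G ≤ graphDiam G + 3 := by
  refine ⟨graphDiam_le_rc hG.preconnected, ?_⟩
  obtain ⟨x, y, p, hp, hdom⟩ := hat.exists_dominating_geodesic hG
  calc
    rc G ≤ rc (G.induce {w | w ∈ p.support}) + 3 :=
      rc_le_rc_induce_add_three hdom p.connected_induce_support.preconnected fun v _ => hδ v
    _ ≤ p.length + 3 := by gcongr; exact rc_induce_support_le_length p
    _ = G.dist x y + 3 := by rw [hp]
    _ ≤ graphDiam G + 3 := by gcongr; exact dist_le_graphDiam x y
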